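/- arXiv:1205.0369 — 2 statements merged into one kernel-verified Lean document; each statement's English description precedes it below -/
import Mathlib

section
/- Let r ≥ 2 and let k_1, …, k_r be elements of the field ℚ(k_1,…,k_r) of rational functions (equivalently, state it as a polynomial identity in ℚ[k_1,…,k_r]), and set K = k_1 + ⋯ + k_r. Then the sum of wt(T) over all unordered increasing trees T on the label set {1,…,r} equals k_1 k_2 ⋯ k_r · (K−1)_{r−2}, where (a)_m = a(a−1)⋯(a−m+1) denotes the falling factorial. -/
open scoped Classical

/-- An unordered increasing tree on the label set `{1, …, r}` (encoded as `Fin r`,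
with vertex `i : Fin r` representing the label `i+1`), given by its parent function:
the root (vertex `0`, i.e. label `1`) is fixed, and every other vertex has a
father with a strictly smaller label. -/
def IsParent {r : ℕ} (f : Fin r → Fin r) : Prop :=
  ∀ v : Fin r, if v.val = 0 then f v = v else (f v).val < v.val

/-- The hook of the vertex `v`: the set consisting of `v` together with all of its
descendants (`u` is a descendant of `v` if iterating the parent function starting
from `u` reaches `v`). -/
noncomputable def hookF {r : ℕ} (f : Fin r → Fin r) (v : Fin r) : Finset (Fin r) :=
  Finset.univ.filter fun u => ∃ n, f^[n] u = v

/-- The weight of an increasing tree: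
`wt(T) = ∏_{v ≠ root} k_{f(v)} · ((Σ_{u ∈ 𝔥_T(v)} k_u) − h_T(v) + 1)`,
as a polynomial in `ℚ[k_1, …, k_r]` (variable `i : Fin r` is `k_{i+1}`). -/
noncomputable def wtF {r : ℕ} (f : Fin r → Fin r) : MvPolynomial (Fin r) ℚ :=
  ∏ v ∈ Finset.univ.filter (fun v : Fin r => v.val ≠ 0),
    MvPolynomial.X (f v) *
      ((∑ u ∈ hookF f v, MvPolynomial.X u) - ((hookF f v).card : MvPolynomial (Fin r) ℚ) + 1)

/-- The falling factorial `(a)_m = a(a−1)⋯(a−m+1)`. -/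
def ffall {R : Type*} [CommRing R] (a : R) (m : ℕ) : R :=
  ∏ i ∈ Finset.range m, (a - (i : R))


namespace Hook

/-- leaf-removal recursion -/
noncomputable def G (a : ℕ → ℚ) : ℕ → Finset ℕ → (ℕ → ℚ) → ℚ
  | 0, _, _ => 1
  | n+1, S, x => if n ∈ S then
      (if S.erase n = ∅ then 1 else
        (x n + 1) * ∑ i ∈ S.erase n, a i * G a n (S.erase n) (Function.update x i (x i + x n)))
      else G a n S x

noncomputable def GG (a : ℕ → ℚ) (S : Finset ℕ) (x : ℕ → ℚ) : ℚ := G a (S.sup id + 1) S x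

lemma G_eq (a : ℕ → ℚ) (n : ℕ) (S : Finset ℕ) (x : ℕ → ℚ) (h : ∀ s ∈ S, s < n) :
    G a n S x = GG a S x := by
  induction n with
  | zero =>
    have : S = ∅ := Finset.eq_empty_of_forall_notMem fun s hs => by simpa using h s hs
    subst this
    simp [GG, G]
  | succ n ih =>
    by_cases hn : n ∈ S
    · have : S.sup id = n := by
        apply le_antisymm
        · exact Finset.sup_le fun s hs => Nat.lt_succ_iff.mp (h s hs)
        · exact Finset.le_sup (f := id) hn
      rw [GG, this]
    · rw [G, if_neg hn]
      apply ih
      intro s hs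
      have := h s hs
      have : s ≠ n := fun e => hn (e ▸ hs)
      omega

lemma GG_singleton (a : ℕ → ℚ) (m : ℕ) (x : ℕ → ℚ) : GG a {m} x = 1 := by
  simp [GG, G]

lemma GG_insert (a : ℕ → ℚ) (n : ℕ) (S : Finset ℕ) (x : ℕ → ℚ) (h : ∀ s ∈ S, s < n)
    (hS : S.Nonempty) :
    GG a (insert n S) x =
      (x n + 1) * ∑ i ∈ S, a i * GG a S (Function.update x i (x i + x n)) := by
  have hn : n ∉ S := fun hh => lt_irrefl _ (h n hh)
  rw [← G_eq a (n+1) (insert n S) x, G, if_pos (Finset.mem_insert_self _ _),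
    Finset.erase_insert hn, if_neg hS.ne_empty]
  · congr 1
    refine Finset.sum_congr rfl fun i _ => ?_
    rw [G_eq _ _ _ _ h]
  · intro s hs
    rcases Finset.mem_insert.mp hs with rfl | hs
    · omega
    · have := h s hs
      omega

lemma GG_congr (a : ℕ → ℚ) (S : Finset ℕ) : ∀ (x y : ℕ → ℚ) (_ : ∀ s ∈ S, x s = y s),
    GG a S x = GG a S y := by
  induction S using Finset.induction_on_max with
  | empty => intro x y _; simp [GG, G]
  | insert n S h ih =>
    intro x y hxy
    rcases S.eq_empty_or_nonempty with rfl | hS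
    · simp [GG_singleton]
    · rw [GG_insert a n S x h hS, GG_insert a n S y h hS, hxy n (Finset.mem_insert_self _ _)]
      congr 1
      refine Finset.sum_congr rfl fun i hi => ?_
      congr 1
      apply ih
      intro s hs
      rw [hxy i (Finset.mem_insert_of_mem hi)]
      by_cases hsi : s = i
      · subst hsi; simp
      · simp [hsi, hxy s (Finset.mem_insert_of_mem hs)]

lemma GG_update (a : ℕ → ℚ) (S : Finset ℕ) (x : ℕ → ℚ) (i : ℕ) (c : ℚ) (hi : i ∉ S) :
    GG a S (Function.update x i c) = GG a S x := by
  apply GG_congr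
  intro s hs
  have : s ≠ i := fun e => hi (e ▸ hs)
  simp [this]

lemma sum_upd (S : Finset ℕ) (x : ℕ → ℚ) (i : ℕ) (c : ℚ) (hi : i ∈ S) :
    ∑ s ∈ S, Function.update x i (x i + c) s = ∑ s ∈ S, x s + c := by
  rw [Finset.sum_update_of_mem hi, ← Finset.add_sum_erase S x hi, Finset.sdiff_singleton_eq_erase]
  ring

lemma sum_upd_not (S : Finset ℕ) (x : ℕ → ℚ) (i : ℕ) (c : ℚ) (hi : i ∉ S) :
    ∑ s ∈ S, Function.update x i c s = ∑ s ∈ S, x s := by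
  rw [Finset.sum_update_of_notMem hi]

lemma decomp (a : ℕ → ℚ) (m b : ℕ) (hmb : m < b) (A : Finset ℕ) : (∀ s ∈ A, b < s) →
    ∀ x : ℕ → ℚ, GG a (insert m (insert b A)) x =
    ∑ B ∈ A.powerset, a m * (∑ u ∈ insert b B, x u + 1) * GG a (insert b B) x *
      GG a (insert m (A \ B)) x := by
  induction A using Finset.induction_on_max with
  | empty =>
    intro _ x
    have : (insert m (insert b ∅) : Finset ℕ) = insert b {m} := by
      ext; simp [or_comm]
    rw [this, GG_insert _ _ _ _ (by simpa using hmb) (by simp)]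
    simp [GG_singleton]
    ring
  | insert n A h ih =>
    intro hb x
    have hnA : n ∉ A := fun hh => lt_irrefl _ (h n hh)
    have hbn : b < n := hb n (by simp)
    have hbA : ∀ s ∈ A, b < s := fun s hs => hb s (by simp [hs])
    have e1 : insert m (insert b (insert n A)) = insert n (insert m (insert b A)) := by
      ext; simp; tauto
    rw [e1, GG_insert]
    rotate_left
    · intro s hs
      simp only [Finset.mem_insert] at hs
      rcases hs with rfl | rfl | hs
      · omega
      · omega
      · exact h s hs
    · simp
    rw [Finset.sum_powerset_insert hnA, ← Finset.sum_add_distrib]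
    simp only [ih hbA, Finset.mul_sum]
    rw [Finset.sum_comm]
    refine Finset.sum_congr rfl fun B hB => ?_
    have hBA : B ⊆ A := Finset.mem_powerset.mp hB
    have hnB : n ∉ B := fun hh => hnA (hBA hh)
    have e2 : insert m (insert b A) = insert b B ∪ insert m (A \ B) := by
      ext s; simp only [Finset.mem_insert, Finset.mem_union, Finset.mem_sdiff]
      have := @hBA s
      tauto
    have hdisj : Disjoint (insert b B) (insert m (A \ B)) := by
      rw [Finset.disjoint_left]
      intro s hs hs'
      simp only [Finset.mem_insert, Finset.mem_sdiff] at hs hs'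
      rcases hs with rfl | hs
      · rcases hs' with hs' | hs'
        · omega
        · exact lt_irrefl _ (hbA _ hs'.1)
      · rcases hs' with rfl | hs'
        · have := hbA _ (hBA hs); omega
        · exact hs'.2 hs
    have e3 : (insert n A) \ B = insert n (A \ B) := Finset.insert_sdiff_of_notMem _ hnB
    have e4 : (insert n A) \ (insert n B) = A \ B := by
      ext s; simp only [Finset.mem_insert, Finset.mem_sdiff]
      have : s = n → s ∉ A := fun e => e ▸ hnA
      tauto
    have e5 : insert m (insert n (A \ B)) = insert n (insert m (A \ B)) := Finset.insert_comm _ _ _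
    have e6 : insert b (insert n B) = insert n (insert b B) := Finset.insert_comm _ _ _
    rw [e2, Finset.sum_union hdisj, e3, e4, e5, e6]
    rw [GG_insert a n (insert b B) x _ (by simp), GG_insert a n (insert m (A \ B)) x _ (by simp)]
    rotate_left
    · intro s hs
      simp only [Finset.mem_insert, Finset.mem_sdiff] at hs
      rcases hs with rfl | hs
      · omega
      · exact h s hs.1
    · intro s hs
      simp only [Finset.mem_insert] at hs
      rcases hs with rfl | hs
      · omega
      · exact h s (hBA hs)
    rw [add_comm]
    congr 1
    · simp only [Finset.mul_sum]
      refine Finset.sum_congr rfl fun i hi => ?_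
      have hi' : i ∉ insert b B := fun hh => Finset.disjoint_left.mp hdisj hh hi
      rw [GG_update a (insert b B) x i _ hi', sum_upd_not _ _ _ _ hi']
      ring
    · rw [Finset.sum_insert (a := n) (s := insert b B) (by simp [hnB]; omega)]
      simp only [Finset.mul_sum, Finset.sum_mul]
      refine Finset.sum_congr rfl fun i hi => ?_
      have hi' : i ∉ insert m (A \ B) := fun hh => Finset.disjoint_left.mp hdisj hi hh
      rw [GG_update a (insert m (A \ B)) x i _ hi', sum_upd _ _ _ _ hi]
      ring

/-! Hurwitz-type identity -/

noncomputable def e (k : ℕ → ℕ) (S : Finset ℕ) (u : ℚ) : ℚ :=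
  ffall (u + ∑ s ∈ S, (k s : ℚ)) S.card

noncomputable def p (k : ℕ → ℕ) (S : Finset ℕ) (t : ℚ) : ℚ :=
  if S = ∅ then 1 else t * ffall (t + ∑ s ∈ S, (k s : ℚ) - 1) (S.card - 1)

lemma ffall_succ (x : ℚ) (n : ℕ) : ffall x (n+1) = ffall x n * (x - n) := by
  simp [ffall, Finset.prod_range_succ]

lemma ffall_succ' (x : ℚ) (n : ℕ) : ffall (x + 1) (n+1) = (x + 1) * ffall x n := by
  simp only [ffall, Finset.prod_range_succ', mul_comm]
  simp

lemma sum_erase_k (k : ℕ → ℕ) (S : Finset ℕ) (s : ℕ) (hs : s ∈ S) :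
    (k s : ℚ) + ∑ s ∈ S.erase s, (k s : ℚ) = ∑ s ∈ S, (k s : ℚ) :=
  Finset.add_sum_erase S (fun s => (k s : ℚ)) hs

lemma e_diff (k : ℕ → ℕ) (S : Finset ℕ) (u : ℚ) :
    e k S (u+1) = e k S u + ∑ s ∈ S, e k (S.erase s) (u + k s) := by
  have : ∀ s ∈ S, e k (S.erase s) (u + k s) = ffall (u + ∑ s ∈ S, (k s : ℚ)) (S.card - 1) := by
    intro s hs
    rw [e, Finset.card_erase_of_mem hs, add_assoc, sum_erase_k k S s hs]
  rw [Finset.sum_congr rfl this, Finset.sum_const, e, e]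
  rcases hc : S.card with _ | n
  · simp [ffall]
  · rw [show u + 1 + ∑ s ∈ S, (k s : ℚ) = u + ∑ s ∈ S, (k s : ℚ) + 1 by ring, ffall_succ',
      ffall_succ]
    simp
    ring

lemma p_diff (k : ℕ → ℕ) (S : Finset ℕ) (t : ℚ) :
    p k S (t+1) = p k S t + ∑ s ∈ S, p k (S.erase s) (t + k s) := by
  rcases hc : S.card with _ | _ | n
  · have := Finset.card_eq_zero.mp hc
    subst this
    simp [p]
  · obtain ⟨s, rfl⟩ := Finset.card_eq_one.mp hc
    simp [p, ffall]
  · have hne : S ≠ ∅ := by rintro rfl; simp at hc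
    have : ∀ s ∈ S, p k (S.erase s) (t + k s) =
        (t + k s) * ffall (t + ∑ s ∈ S, (k s : ℚ) - 1) n := by
      intro s hs
      have h1 : (S.erase s).card = n + 1 := by rw [Finset.card_erase_of_mem hs, hc]; rfl
      have h2 : S.erase s ≠ ∅ := by intro h; rw [h] at h1; simp at h1
      rw [p, if_neg h2, h1, add_assoc, sum_erase_k k S s hs]
      rfl
    rw [Finset.sum_congr rfl this, ← Finset.sum_mul, Finset.sum_add_distrib, p, p, if_neg hne,
      if_neg hne, hc, Finset.sum_const, hc]
    rw [show t + 1 + ∑ s ∈ S, (k s : ℚ) - 1 = t + ∑ s ∈ S, (k s : ℚ) - 1 + 1 by ring]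
    simp only [Nat.add_sub_cancel]
    rw [ffall_succ', ffall_succ]
    simp
    ring

lemma swap_sum (S : Finset ℕ) (F : Finset ℕ → Finset ℕ → ℕ → ℚ) :
    ∑ B ∈ S.powerset, ∑ s ∈ S \ B, F B ((S \ B).erase s) s =
    ∑ s ∈ S, ∑ B ∈ (S.erase s).powerset, F B ((S.erase s) \ B) s := by
  rw [Finset.sum_comm' (t' := S) (s' := fun s => (S.erase s).powerset)]
  · refine Finset.sum_congr rfl fun s hs => Finset.sum_congr rfl fun B hB => ?_
    congr 1
    ext; simp; tauto
  · intro B s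
    simp only [Finset.mem_powerset, Finset.mem_sdiff, Finset.subset_erase]
    tauto

lemma hurwitz (k : ℕ → ℕ) (n : ℕ) : ∀ (S : Finset ℕ), S.card = n → ∀ (t : ℕ) (u : ℚ),
    e k S (t + u) = ∑ B ∈ S.powerset, e k B u * p k (S \ B) t := by
  induction n with
  | zero =>
    intro S hS t u
    have := Finset.card_eq_zero.mp hS
    subst this
    simp [e, p, ffall]
  | succ n ih =>
    intro S hS t u
    induction t with
    | zero =>
      rw [Finset.sum_eq_single S]
      · simp [p]
      · intro B hB hne
        have : S \ B ≠ ∅ := by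
          intro h
          exact hne (Finset.Subset.antisymm (Finset.mem_powerset.mp hB)
            (Finset.sdiff_eq_empty_iff_subset.mp h))
        rw [p, if_neg this]
        simp
      · simp
    | succ t iht =>
      have h1 : ((t + 1 : ℕ) : ℚ) + u = (t + u) + 1 := by push_cast; ring
      rw [h1, e_diff, iht]
      push_cast
      simp only [p_diff, mul_add, Finset.sum_add_distrib, Finset.mul_sum]
      congr 1
      rw [swap_sum S (fun B C s => e k B u * p k C (t + k s))]
      refine Finset.sum_congr rfl fun s hs => ?_
      have := ih (S.erase s) (by rw [Finset.card_erase_of_mem hs, hS]; rfl) (t + k s) u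
      push_cast at this
      rw [← this]
      congr 1
      ring

lemma main_aux (k : ℕ → ℕ) (n : ℕ) : ∀ (A : Finset ℕ), A.card = n → ∀ m, (∀ s ∈ A, m < s) →
    GG (fun i => (k i : ℚ)) (insert m A) (fun i => (k i : ℚ) - 1) =
      (∏ s ∈ A, (k s : ℚ)) * p k A (k m) := by
  induction n using Nat.strong_induction_on with
  | _ n ih =>
  intro A hA m hm
  rcases A.eq_empty_or_nonempty with rfl | hne
  · simp [GG_singleton, p]
  obtain ⟨b, A, hbA, rfl⟩ : ∃ b A', (∀ s ∈ A', b < s) ∧ A = insert b A' := by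
    refine ⟨A.min' hne, A.erase (A.min' hne), ?_, (Finset.insert_erase (Finset.min'_mem _ _)).symm⟩
    intro s hs
    exact Finset.min'_lt_of_mem_erase_min' A hne hs
  have hb : b ∉ A := fun h => lt_irrefl _ (hbA b h)
  have hmb : m < b := hm b (by simp)
  rw [Finset.card_insert_of_notMem hb] at hA
  rw [decomp _ m b hmb A hbA]
  have key : ∀ B ∈ A.powerset,
      (k m : ℚ) * (∑ u ∈ insert b B, ((k u : ℚ) - 1) + 1) *
        GG (fun i => (k i : ℚ)) (insert b B) (fun i => (k i : ℚ) - 1) *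
        GG (fun i => (k i : ℚ)) (insert m (A \ B)) (fun i => (k i : ℚ) - 1) =
      ((k m : ℚ) * k b * ∏ s ∈ A, (k s : ℚ)) * (e k B (k b - 1) * p k (A \ B) (k m)) := by
    intro B hB
    have hBA := Finset.mem_powerset.mp hB
    have hbB : b ∉ B := fun h => hb (hBA h)
    have c1 := Finset.card_le_card hBA
    have c2 := Finset.card_le_card (Finset.sdiff_subset : A \ B ⊆ A)
    rw [ih B.card (by omega) B rfl b (fun s hs => hbA s (hBA hs)),
      ih (A \ B).card (by omega) (A \ B) rfl m
        (fun s hs => hm s (Finset.mem_insert_of_mem (Finset.mem_sdiff.mp hs).1)),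
      ← Finset.prod_sdiff hBA, Finset.sum_insert hbB, Finset.sum_sub_distrib]
    have h3 : ((k b : ℚ) - 1 + (∑ x ∈ B, (k x : ℚ) - ∑ x ∈ B, (1 : ℚ)) + 1) * p k B (k b) =
        k b * e k B (k b - 1) := by
      rcases hc : B.card with _ | c
      · have := Finset.card_eq_zero.mp hc
        subst this
        simp [e, p, ffall]
      · have hne : B ≠ ∅ := by rintro rfl; simp at hc
        rw [p, e, if_neg hne, Finset.sum_const, hc, ffall_succ,
          show (k b : ℚ) - 1 + ∑ x ∈ B, (k x : ℚ) = k b + ∑ x ∈ B, (k x : ℚ) - 1 by ring]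
        simp
        ring
    linear_combination ((k m : ℚ) * (∏ s ∈ B, (k s : ℚ)) * (∏ s ∈ A \ B, (k s : ℚ)) *
      p k (A \ B) (k m)) * h3
  rw [Finset.sum_congr rfl key, ← Finset.mul_sum, ← hurwitz k _ A rfl, Finset.prod_insert hb, p,
    if_neg (by simp), e, Finset.card_insert_of_notMem hb, Finset.sum_insert hb]
  rw [show (k m : ℚ) + (k b - 1) + ∑ s ∈ A, (k s : ℚ) = k m + (k b + ∑ s ∈ A, (k s : ℚ)) - 1 by
    ring]
  simp
  ring

/-! Trees -/

noncomputable def wq {r : ℕ} (a x : ℕ → ℚ) (f : Fin r → Fin r) : ℚ :=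
  ∏ v : Fin r, if v.val = 0 then 1 else a (f v) * (∑ u ∈ hookF f v, x u + 1)

def extF {n : ℕ} (f : Fin n → Fin n) (i : Fin n) : Fin (n+1) → Fin (n+1) :=
  Fin.lastCases i.castSucc (fun v => (f v).castSucc)

@[simp] lemma extF_cast {n : ℕ} (f : Fin n → Fin n) (i v : Fin n) :
    extF f i v.castSucc = (f v).castSucc := by simp [extF]

@[simp] lemma extF_last {n : ℕ} (f : Fin n → Fin n) (i : Fin n) :
    extF f i (Fin.last n) = i.castSucc := by simp [extF]

lemma extF_iter {n : ℕ} (f : Fin n → Fin n) (i v : Fin n) (j : ℕ) :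
    (extF f i)^[j] v.castSucc = (f^[j] v).castSucc := by
  induction j generalizing v with
  | zero => rfl
  | succ j ih => simp [Function.iterate_succ_apply, ih]

lemma hook_sum_cast {n : ℕ} (f : Fin n → Fin n) (i v : Fin n) (x : ℕ → ℚ) :
    ∑ u ∈ hookF (extF f i) v.castSucc, x u =
      ∑ u ∈ hookF f v, Function.update x i (x i + x n) u := by
  have h1 : ∀ u : Fin n, (∃ j, (extF f i)^[j] u.castSucc = v.castSucc) ↔ ∃ j, f^[j] u = v := by
    intro u; simp [extF_iter]
  have h2 : (∃ j, (extF f i)^[j] (Fin.last n) = v.castSucc) ↔ ∃ j, f^[j] i = v := by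
    constructor
    · rintro ⟨j, hj⟩
      rcases j with _ | j
      · exact absurd hj.symm (Fin.castSucc_lt_last v).ne
      · refine ⟨j, ?_⟩
        simpa [Function.iterate_succ_apply, extF_iter] using hj
    · rintro ⟨j, hj⟩
      refine ⟨j+1, ?_⟩
      simp [Function.iterate_succ_apply, extF_iter, hj]
  rw [hookF, hookF, Finset.sum_filter, Finset.sum_filter, Fin.sum_univ_castSucc]
  simp only [h1, h2, Fin.val_castSucc, Fin.val_last]
  have h3 : ∀ u : Fin n, (if ∃ j, f^[j] u = v then Function.update x i (x i + x n) (u : ℕ) else 0)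
      = (if ∃ j, f^[j] u = v then x u else 0) +
        (if u = i then (if ∃ j, f^[j] i = v then x n else 0) else 0) := by
    intro u
    by_cases hu : u = i
    · subst hu; by_cases hh : ∃ j, f^[j] u = v <;> simp [hh]
    · have : (u : ℕ) ≠ i := fun hh => hu (Fin.ext hh)
      simp [hu, this]
  rw [Finset.sum_congr rfl fun u _ => h3 u, Finset.sum_add_distrib]
  simp

lemma hook_last {n : ℕ} (f : Fin n → Fin n) (i : Fin n) (x : ℕ → ℚ) :
    ∑ u ∈ hookF (extF f i) (Fin.last n), x u = x n := by
  have : hookF (extF f i) (Fin.last n) = {Fin.last n} := by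
    ext u
    simp only [hookF, Finset.mem_filter, Finset.mem_univ, true_and, Finset.mem_singleton]
    constructor
    · rintro ⟨j, hj⟩
      induction u using Fin.lastCases with
      | last => rfl
      | cast u =>
        rw [extF_iter] at hj
        exact absurd hj (Fin.castSucc_lt_last _).ne
    · rintro rfl
      exact ⟨0, rfl⟩
  simp [this]

lemma wq_ext {n : ℕ} (hn : n ≠ 0) (a x : ℕ → ℚ) (f : Fin n → Fin n) (i : Fin n) :
    wq a x (extF f i) = (x n + 1) * (a i * wq a (Function.update x i (x i + x n)) f) := by
  rw [wq, Fin.prod_univ_castSucc, wq]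
  simp only [hook_sum_cast, hook_last, extF_cast, extF_last, Fin.val_castSucc, Fin.val_last, hn,
    if_false]
  ring

lemma extF_parent {n : ℕ} (f : Fin n → Fin n) (hf : IsParent f) (i : Fin n) :
    IsParent (extF f i) := by
  intro v
  induction v using Fin.lastCases with
  | last =>
    have : n ≠ 0 := by have := i.2; omega
    simp [this]
  | cast v =>
    have := hf v
    simp only [Fin.val_castSucc, extF_cast]
    split_ifs at this ⊢ with h
    · rw [this]
    · exact this

lemma trees_succ {n : ℕ} (hn : n ≠ 0) (F : (Fin (n+1) → Fin (n+1)) → ℚ) :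
    ∑ T : {f : Fin (n+1) → Fin (n+1) // IsParent f}, F T.val =
    ∑ T : {f : Fin n → Fin n // IsParent f}, ∑ i : Fin n, F (extF T.val i) := by
  rw [← Fintype.sum_prod_type' (f := fun (T : {f : Fin n → Fin n // IsParent f}) (i : Fin n) =>
    F (extF T.val i))]
  symm
  refine Fintype.sum_bijective
    (fun q : {f : Fin n → Fin n // IsParent f} × Fin n =>
      (⟨extF q.1.val q.2, extF_parent _ q.1.2 _⟩ : {f : Fin (n+1) → Fin (n+1) // IsParent f}))
    ⟨?_, ?_⟩ _ _ (fun _ => rfl)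
  · rintro ⟨⟨f, hf⟩, i⟩ ⟨⟨g, hg⟩, j⟩ h
    have h := Subtype.mk.inj h
    have h1 : i = j := by
      have := congrFun h (Fin.last n)
      simpa using this
    have h2 : f = g := by
      funext v
      have := congrFun h v.castSucc
      simpa using this
    subst h1 h2
    rfl
  · rintro ⟨g, hg⟩
    have hlt : ∀ v : Fin n, (g v.castSucc).val < n := by
      intro v
      have := hg v.castSucc
      have hv := v.2
      split_ifs at this with h
      · rw [this]; exact hv
      · simp at this; omega
    have hlast : (g (Fin.last n)).val < n := by
      have := hg (Fin.last n)
      rw [if_neg (by simpa using hn)] at this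
      simpa using this
    refine ⟨⟨⟨fun v => ⟨(g v.castSucc).val, hlt v⟩, ?_⟩, ⟨_, hlast⟩⟩, ?_⟩
    · intro v
      have := hg v.castSucc
      simp only [Fin.val_castSucc] at this
      split_ifs at this ⊢ with h
      · apply Fin.ext; simp [this]
      · exact this
    · apply Subtype.ext
      funext v
      induction v using Fin.lastCases with
      | last => simp
      | cast v => simp

lemma trees_G (a : ℕ → ℚ) (n : ℕ) : ∀ x : ℕ → ℚ,
    ∑ T : {f : Fin (n+1) → Fin (n+1) // IsParent f}, wq a x T.val =
      GG a (Finset.range (n+1)) x := by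
  induction n with
  | zero =>
    intro x
    have h1 : (Finset.range (0+1)) = {0} := rfl
    rw [h1, GG_singleton]
    have : Unique {f : Fin (0+1) → Fin (0+1) // IsParent f} :=
      { default := ⟨id, fun v => by simp⟩
        uniq := fun T => Subtype.ext (funext fun v => by apply Fin.ext; omega) }
    rw [Fintype.sum_unique]
    simp [wq]
  | succ n ih =>
    intro x
    rw [trees_succ (Nat.succ_ne_zero n), Finset.range_add_one (n := n+1), GG_insert]
    rotate_left
    · intro s hs; simpa using hs
    · simp
    simp only [wq_ext (Nat.succ_ne_zero n)]
    rw [Finset.sum_comm, Finset.mul_sum, Finset.sum_range]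
    refine Finset.sum_congr rfl fun i _ => ?_
    rw [← ih, Finset.mul_sum, Finset.mul_sum]

lemma final_nat (r : ℕ) (hr : 2 ≤ r) (k : ℕ → ℕ) :
    ∑ T : {f : Fin r → Fin r // IsParent f},
      wq (fun i => (k i : ℚ)) (fun i => (k i : ℚ) - 1) T.val =
    (∏ i : Fin r, (k i : ℚ)) * ffall ((∑ i : Fin r, (k i : ℚ)) - 1) (r - 2) := by
  obtain ⟨n, rfl⟩ : ∃ n, r = n + 2 := ⟨r - 2, by omega⟩
  have h0 : Finset.range (n+2) = insert 0 ((Finset.range (n+2)).erase 0) :=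
    (Finset.insert_erase (by simp)).symm
  have hc : ((Finset.range (n+2)).erase 0).card = n + 1 := by
    rw [Finset.card_erase_of_mem (by simp)]; simp
  have hne : (Finset.range (n+2)).erase 0 ≠ ∅ := by intro h; rw [h] at hc; simp at hc
  rw [trees_G _ (n+1), h0, main_aux k _ _ rfl 0, p, if_neg hne, hc,
    ← Finset.prod_range (fun i => (k i : ℚ)), ← Finset.sum_range (fun i => (k i : ℚ)),
    ← Finset.mul_prod_erase _ _ (show 0 ∈ Finset.range (n+2) by simp),
    ← Finset.add_sum_erase _ _ (show 0 ∈ Finset.range (n+2) by simp)]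
  · simp only [Nat.add_sub_cancel]
    ring
  · intro s hs
    have := (Finset.mem_erase.mp hs).1
    omega

lemma poly_ext {σ : Type} [Finite σ] (P Q : MvPolynomial σ ℚ)
    (h : ∀ k : σ → ℕ, MvPolynomial.eval (fun i => (k i : ℚ)) P =
      MvPolynomial.eval (fun i => (k i : ℚ)) Q) : P = Q := by
  refine MvPolynomial.funext_set (fun _ => Set.range (Nat.cast : ℕ → ℚ))
    (fun _ => Set.infinite_range_of_injective Nat.cast_injective) ?_
  intro x hx
  choose k hk using fun i => hx i (Set.mem_univ i)
  have : x = fun i => (k i : ℚ) := funext fun i => (hk i).symm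
  rw [this]
  exact h k

end Hook

/-- The hook formula: for `r ≥ 2`, the sum of `wt(T)` over all unordered increasing
trees on `{1, …, r}` equals `k_1 ⋯ k_r · (K − 1)_{r−2}` where `K = k_1 + ⋯ + k_r`. -/
theorem stmt0 (r : ℕ) (hr : 2 ≤ r) :
    ∑ T : {f : Fin r → Fin r // IsParent f}, wtF T.val
      = (∏ i : Fin r, MvPolynomial.X i) *
          ffall ((∑ i : Fin r, (MvPolynomial.X i : MvPolynomial (Fin r) ℚ)) - 1) (r - 2) := by
  
  apply Hook.poly_ext
  intro k
  have h := Hook.final_nat r hr (fun i => if hi : i < r then k ⟨i, hi⟩ else 0)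
  simp only [Fin.is_lt, dif_pos, Fin.eta] at h
  have hff : ∀ (P : MvPolynomial (Fin r) ℚ) (m : ℕ),
      MvPolynomial.eval (fun i => (k i : ℚ)) (ffall P m) =
        ffall (MvPolynomial.eval (fun i => (k i : ℚ)) P) m := by
    intro P m
    simp [ffall, map_prod]
  rw [map_mul, hff, map_sub, map_sum, map_sum, map_prod]
  simp only [MvPolynomial.eval_X, map_one]
  rw [← h]
  refine Finset.sum_congr rfl fun T _ => ?_
  rw [wtF, Hook.wq, map_prod, Finset.prod_filter]
  refine Finset.prod_congr rfl fun v _ => ?_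
  by_cases hv : v.val = 0
  · simp [hv]
  · simp [hv, Finset.sum_sub_distrib]
end

section
/- Let n ≥ 2 and let μ = (μ_1 ≥ μ_2 ≥ ⋯ ≥ μ_ℓ ≥ 1) be a partition of n with ℓ parts, and set j = n − ℓ + 2. Fix a permutation σ_μ in the symmetric group S_n whose cycle type is μ. Then the number of pairs (σ_1, σ_2) of permutations in S_n such that σ_1 σ_2 = σ_μ, σ_2 is an n-cycle, and σ_1 has exactly j − 1 cycles (counting fixed points as cycles) equals (∏_{i=1}^{ℓ} μ_i) · (n−1)! / (n − ℓ + 1)!. -/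
open scoped Classical

namespace NCount
set_option linter.unusedSectionVars false
set_option linter.unusedDecidableInType false
open Equiv Equiv.Perm Finset

variable {α : Type*} [Fintype α] [DecidableEq α]

/-- the cycle (as a set) of `y` -/
noncomputable def cl (σ : Perm α) (y : α) : Finset α := univ.filter (fun z => σ.SameCycle y z)

/-- number of cycles -/
noncomputable def ncyc (σ : Perm α) : ℕ := (univ.image (cl σ)).card

/-- labelling of the cycles -/
def IsLab {ι : Type*} [DecidableEq ι] (σ : Perm α) (f : α → ι) : Prop := ∀ y z, f y = f z ↔ σ.SameCycle y z

def IsLong (σ : Perm α) : Prop := ∀ y z, σ.SameCycle y z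

lemma isLab_cl (σ : Perm α) : IsLab σ (cl σ) := by
  intro y z
  constructor
  · intro h
    have : z ∈ cl σ z := by simp [cl, SameCycle.refl]
    rw [← h] at this
    simpa [cl] using this
  · intro h
    ext w
    simp only [cl, mem_filter, mem_univ, true_and]
    exact ⟨fun k => h.symm.trans k, fun k => h.trans k⟩

lemma card_image_le_of {ι κ : Type*} [DecidableEq ι] [DecidableEq κ] (f : α → ι) (g : α → κ)
    (h : ∀ y z, g y = g z → f y = f z) : (univ.image f).card ≤ (univ.image g).card := by
  rcases isEmpty_or_nonempty α with he | ⟨⟨y0⟩⟩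
  · simp
  refine Finset.card_le_card_of_surjOn
    (fun k => f (if hk : ∃ y, g y = k then hk.choose else y0)) ?_
  intro i hi
  obtain ⟨y, -, rfl⟩ := Finset.mem_image.1 (Finset.mem_coe.1 hi)
  refine ⟨g y, by simp, ?_⟩
  have hk : ∃ z, g z = g y := ⟨y, rfl⟩
  simp only [hk, dite_true]
  exact h _ _ hk.choose_spec

lemma IsLab.card {ι : Type*} [DecidableEq ι] {σ : Perm α} {f : α → ι} (hf : IsLab σ f) :
    (univ.image f).card = ncyc σ :=
  le_antisymm (card_image_le_of _ _ fun y z h => (hf y z).2 ((isLab_cl σ y z).1 h))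
    (card_image_le_of _ _ fun y z h => (isLab_cl σ y z).2 ((hf y z).1 h))

/-- merged labelling -/
noncomputable def mg {ι : Type*} [DecidableEq ι] (f : α → ι) (x a : α) (y : α) : ι := if f y = f a then f x else f y

lemma sameCycle_inv {ι : Type*} [DecidableEq ι] {τ : Perm α} {g : α → ι} (h : ∀ y, g (τ y) = g y) {y z : α}
    (hs : τ.SameCycle y z) : g y = g z := by
  obtain ⟨i, -, rfl⟩ := hs.exists_pow_eq'
  clear hs
  induction i with
  | zero => simp
  | succ k ih => rw [pow_succ', Perm.mul_apply, h, ih]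

lemma IsLab.apply {ι : Type*} [DecidableEq ι] {σ : Perm α} {f : α → ι} (hf : IsLab σ f) (y : α) : f (σ y) = f y :=
  (hf _ _).2 (sameCycle_apply_left.2 (SameCycle.refl _ _))

lemma mg_inv {ι : Type*} [DecidableEq ι] {π : Perm α} {f : α → ι} (hf : IsLab π f) (x a y : α) :
    mg f x a ((swap x a * π) y) = mg f x a y := by
  have h := hf.apply y
  rw [Perm.mul_apply]
  by_cases h1 : π y = x
  · rw [h1, swap_apply_left]; rw [h1] at h; simp [mg, ← h]
  by_cases h2 : π y = a
  · rw [h2, swap_apply_right]; rw [h2] at h; simp [mg, ← h]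
  rw [swap_apply_of_ne_of_ne h1 h2]; simp [mg, h]

lemma le_ncyc_swap {ι : Type*} [DecidableEq ι] {π : Perm α} {f : α → ι} (hf : IsLab π f) (x a : α) :
    (univ.image (mg f x a)).card ≤ ncyc (swap x a * π) :=
  card_image_le_of _ _ fun y z h => sameCycle_inv (mg_inv hf x a) ((isLab_cl _ y z).1 h)

lemma image_mg {ι : Type*} [DecidableEq ι] (f : α → ι) (x a : α) (hxa : f x ≠ f a) :
    univ.image (mg f x a) = (univ.image f).erase (f a) := by
  ext i
  simp only [mem_image, mem_univ, true_and, mem_erase, mg]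
  constructor
  · rintro ⟨y, rfl⟩
    split_ifs with h
    · exact ⟨hxa, x, rfl⟩
    · exact ⟨h, y, rfl⟩
  · rintro ⟨h, y, rfl⟩
    exact ⟨y, by simp [h]⟩

lemma join_aux (π : Perm α) (x a : α) (h : ¬ π.SameCycle x a) (k : ℕ) :
    ∀ y, (π ^ (k+1)) y = x → (swap x a * π).SameCycle y a := by
  induction k with
  | zero =>
    intro y hy
    have : (swap x a * π) y = a := by simp at hy; simp [hy]
    rw [← sameCycle_apply_left, this]
  | succ k ih =>
    intro y hy
    by_cases h1 : π y = x
    · have : (swap x a * π) y = a := by simp [h1]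
      rw [← sameCycle_apply_left, this]
    have h2 : π y ≠ a := by
      rintro rfl
      apply h
      rw [← hy, pow_succ, Perm.mul_apply]
      exact sameCycle_pow_left.2 (SameCycle.refl _ _)
    have : (swap x a * π) y = π y := by
      rw [Perm.mul_apply, swap_apply_of_ne_of_ne h1 h2]
    rw [← sameCycle_apply_left, this]
    apply ih
    rw [← hy, pow_succ _ (k+1), Perm.mul_apply]

lemma join_xa (π : Perm α) (x a : α) (h : ¬ π.SameCycle x a) : (swap x a * π).SameCycle x a := by
  obtain ⟨i, h0, -, hi⟩ := (SameCycle.refl π x).exists_pow_eq''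
  obtain ⟨k, rfl⟩ := Nat.exists_eq_succ_of_ne_zero h0.ne'
  exact join_aux π x a h k x hi

lemma join_le (π : Perm α) (x a : α) (h : ¬ π.SameCycle x a) {y z : α} (hs : π.SameCycle y z) :
    (swap x a * π).SameCycle y z := by
  have hxa := join_xa π x a h
  rw [← isLab_cl]
  refine sameCycle_inv (τ := π) ?_ hs
  intro y
  rw [isLab_cl]
  have key : (swap x a * π).SameCycle ((swap x a * π) y) y := sameCycle_apply_left.2 (SameCycle.refl _ _)
  rw [Perm.mul_apply] at key
  by_cases h1 : π y = x
  · rw [h1, swap_apply_left] at key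
    rw [h1]; exact hxa.trans key
  by_cases h2 : π y = a
  · rw [h2, swap_apply_right] at key
    rw [h2]; exact hxa.symm.trans key
  rwa [swap_apply_of_ne_of_ne h1 h2] at key

lemma isLab_mg {ι : Type*} [DecidableEq ι] {π : Perm α} {f : α → ι} (hf : IsLab π f) (x a : α) (hxa : f x ≠ f a) :
    IsLab (swap x a * π) (mg f x a) := by
  have h : ¬ π.SameCycle x a := fun h => hxa ((hf _ _).2 h)
  have J := join_xa π x a h
  intro y z
  refine ⟨fun e => ?_, fun hs => sameCycle_inv (mg_inv hf x a) hs⟩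
  have L : ∀ {u v}, f u = f v → (swap x a * π).SameCycle u v :=
    fun e => join_le π x a h ((hf _ _).1 e)
  unfold mg at e
  split_ifs at e with h1 h2 h2
  · exact L (h1.trans h2.symm)
  · exact (L h1).trans (J.symm.trans (L e))
  · exact (L e).trans (J.trans (L h2.symm))
  · exact L e

lemma ncyc_join {π : Perm α} {x a : α} (h : ¬ π.SameCycle x a) :
    ncyc (swap x a * π) + 1 = ncyc π := by
  have hxa : cl π x ≠ cl π a := fun e => h ((isLab_cl _ _ _).1 e)
  rw [← (isLab_mg (isLab_cl π) x a hxa).card, image_mg _ _ _ hxa, Finset.card_erase_add_one]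
  · rfl
  · simp

lemma ncyc_eq_card {σ : Perm α} : ncyc σ = Fintype.card α ↔ σ = 1 := by
  constructor
  · intro h
    have : Set.InjOn (cl σ) (univ : Finset α) := Finset.card_image_iff.1 h
    ext y
    exact this (by simp) (by simp) ((isLab_cl σ).apply y)
  · rintro rfl
    have : Set.InjOn (cl (1 : Perm α)) (univ : Finset α) := by
      intro y _ z _ h
      simpa using (isLab_cl _ _ _).1 h
    exact Finset.card_image_iff.2 this

/-- the set counted -/
noncomputable def C (A : Finset α) (π : Perm α) (r : ℕ) : Finset (Perm α) :=
  univ.filter fun σ => (∀ y, y ∉ A → σ y = y) ∧ ncyc σ + r = Fintype.card α ∧ IsLong (σ⁻¹ * π)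

lemma C_zero (A : Finset α) (π : Perm α) : (C A π 0).card = if IsLong π then 1 else 0 := by
  have : C A π 0 = if IsLong π then {1} else ∅ := by
    ext σ
    simp only [C, mem_filter, mem_univ, true_and, add_zero, ncyc_eq_card]
    split_ifs with h
    · simp only [mem_singleton]
      exact ⟨fun h => h.2.1, by rintro rfl; simpa using h⟩
    · simp only [notMem_empty, iff_false]
      rintro ⟨-, rfl, h'⟩
      exact h (by simpa using h')
  rw [this]; split_ifs <;> simp

lemma C_empty (π : Perm α) (r : ℕ) : (C ∅ π (r+1)).card = 0 := by
  rw [Finset.card_eq_zero]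
  ext σ
  simp only [C, mem_filter, mem_univ, true_and, notMem_empty, iff_false, not_false_eq_true, true_implies]
  rintro ⟨h, h2, -⟩
  have : σ = 1 := by ext y; simpa using h y
  rw [ncyc_eq_card.2 this] at h2
  omega

lemma C_insert (A : Finset α) (x : α) (hx : x ∉ A) (π : Perm α) (r : ℕ) :
    (C (insert x A) π (r+1)).card =
      (C A π (r+1)).card + ∑ a ∈ A, (C A (swap x a * π) r).card := by
  have hm : ∀ σ ∈ C (insert x A) π (r+1), σ x ∈ insert x A := by
    intro σ hσ
    by_contra hc
    have := (mem_filter.1 hσ).2.1 _ hc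
    have := σ.injective this
    rw [this] at hc
    simp at hc
  rw [Finset.card_eq_sum_card_fiberwise hm, Finset.sum_insert hx]
  congr 1
  · congr 1
    ext σ
    simp only [C, mem_filter, mem_univ, true_and, mem_insert, not_or]
    constructor
    · rintro ⟨⟨h1, h2⟩, h3⟩
      refine ⟨fun y hy => ?_, h2⟩
      by_cases h : y = x
      · rw [h, h3]
      · exact h1 y ⟨h, hy⟩
    · rintro ⟨h1, h2⟩
      exact ⟨⟨fun y hy => h1 y hy.2, h2⟩, h1 x hx⟩
  · refine Finset.sum_congr rfl fun a ha => ?_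
    have hax : a ≠ x := by rintro rfl; exact hx ha
    have hns : ∀ σ : Perm α, σ x = x → ¬ σ.SameCycle x a := by
      intro σ h hs
      obtain ⟨i, rfl⟩ := hs
      exact hax (zpow_apply_eq_self_of_apply_eq_self h i)
    refine Finset.card_bij' (fun σ _ => swap x a * σ) (fun σ _ => swap x a * σ) ?_ ?_ ?_ ?_
    · intro σ hσ
      simp only [C, mem_filter, mem_univ, true_and, mem_insert, not_or] at hσ ⊢
      obtain ⟨⟨h1, h2, h3⟩, h4⟩ := hσ
      have hfx : (swap x a * σ) x = x := by simp [h4]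
      have hn := ncyc_join (hns _ hfx)
      rw [swap_mul_self_mul] at hn
      refine ⟨fun y hy => ?_, by omega, by simpa [mul_assoc] using h3⟩
      by_cases h : y = x
      · rw [h, hfx]
      · rw [Perm.mul_apply, h1 y ⟨h, hy⟩]
        exact swap_apply_of_ne_of_ne h (by rintro rfl; exact hy ha)
    · intro σ hσ
      simp only [C, mem_filter, mem_univ, true_and, mem_insert, not_or] at hσ ⊢
      obtain ⟨h1, h2, h3⟩ := hσ
      have hn := ncyc_join (hns _ (h1 x hx))
      refine ⟨⟨fun y hy => ?_, by omega, by simpa [mul_assoc] using h3⟩, by simp [h1 x hx]⟩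
      rw [Perm.mul_apply, h1 y hy.2]
      exact swap_apply_of_ne_of_ne hy.1 (by rintro rfl; exact hy.2 ha)
    · intro σ _; simp
    · intro σ _; simp

/-- number of elements of `A` with label `i` -/
noncomputable def m {ι : Type*} [DecidableEq ι] (f : α → ι) (A : Finset α) (i : ι) : ℕ :=
  (A.filter fun b => f b = i).card

noncomputable def P {ι : Type*} [DecidableEq ι] (f : α → ι) (A : Finset α) : ℕ := ∏ i ∈ univ.image f, m f A i

lemma one_lt_not_long {π : Perm α} (h : 1 < ncyc π) : ¬ IsLong π := by
  intro hl
  obtain ⟨i, hi, j, hj, hij⟩ := Finset.one_lt_card.1 h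
  simp only [mem_image, mem_univ, true_and] at hi hj
  obtain ⟨y, rfl⟩ := hi
  obtain ⟨z, rfl⟩ := hj
  exact hij ((isLab_cl _ _ _).2 (hl y z))

lemma long_of_ncyc {π : Perm α} (h : ncyc π = 1) : IsLong π := by
  intro y z
  obtain ⟨i, hi⟩ := Finset.card_eq_one.1 h
  have key : ∀ y, cl π y = i := fun y => by
    have : cl π y ∈ univ.image (cl π) := by simp
    rw [hi] at this; simpa using this
  exact (isLab_cl _ _ _).1 ((key y).trans (key z).symm)

lemma ncyc_swap_ge (π : Perm α) (x a : α) : ncyc π ≤ ncyc (swap x a * π) + 1 := by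
  have h := le_ncyc_swap (isLab_cl π) x a
  by_cases hxa : cl π x = cl π a
  · have : mg (cl π) x a = cl π := by
      funext y; simp only [mg]; split_ifs with h
      · rw [h, hxa]
      · rfl
    rw [this] at h
    exact h.trans (Nat.le_succ _)
  · exact (ncyc_join fun h => hxa ((isLab_cl _ _ _).2 h)).ge

lemma ncyc_swap_same {π : Perm α} {x a : α} (hxa : π.SameCycle x a) :
    ncyc π ≤ ncyc (swap x a * π) := by
  have h := le_ncyc_swap (isLab_cl π) x a
  rw [← isLab_cl] at hxa
  have : mg (cl π) x a = cl π := by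
    funext y; simp only [mg]; split_ifs with h
    · rw [h, hxa]
    · rfl
  rw [this] at h
  exact h

lemma C_lt (A : Finset α) : ∀ (π : Perm α) (r : ℕ), r + 1 < ncyc π → (C A π r).card = 0 := by
  induction A using Finset.induction_on with
  | empty =>
    intro π r h
    cases r with
    | zero => rw [C_zero, if_neg (one_lt_not_long h)]
    | succ r => exact C_empty _ _
  | insert x A hx ih =>
    intro π r h
    cases r with
    | zero => rw [C_zero, if_neg (one_lt_not_long h)]
    | succ r =>
      rw [C_insert A x hx, ih _ _ h, zero_add]
      refine Finset.sum_eq_zero fun a _ => ih _ _ ?_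
      have := ncyc_swap_ge π x a
      omega

section prod
variable {ι : Type*} [DecidableEq ι]

lemma m_insert_self (f : α → ι) {A : Finset α} {x : α} (hx : x ∉ A) :
    m f (insert x A) (f x) = m f A (f x) + 1 := by
  unfold m
  rw [Finset.filter_insert, if_pos rfl, Finset.card_insert_of_notMem (by simp [hx])]

lemma m_insert_ne (f : α → ι) {A : Finset α} {x : α} {i : ι} (hi : i ≠ f x) :
    m f (insert x A) i = m f A i := by
  unfold m
  rw [Finset.filter_insert, if_neg hi.symm]

/-- product over labels other than that of x -/
noncomputable def Q (f : α → ι) (A : Finset α) (x : α) : ℕ :=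
  ∏ i ∈ (univ.image f).erase (f x), m f A i

lemma P_eq (f : α → ι) (A : Finset α) (x : α) : P f A = m f A (f x) * Q f A x := by
  unfold P Q
  rw [Finset.mul_prod_erase _ _ (by simp)]

lemma P_insert (f : α → ι) {A : Finset α} {x : α} (hx : x ∉ A) :
    P f (insert x A) = (m f A (f x) + 1) * Q f A x := by
  rw [P_eq f _ x, m_insert_self f hx]
  congr 1
  exact Finset.prod_congr rfl fun i hi => m_insert_ne f (Finset.ne_of_mem_erase hi)

lemma m_mg_self (f : α → ι) (A : Finset α) {x a : α} (hxa : f x ≠ f a) :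
    m (mg f x a) A (f x) = m f A (f x) + m f A (f a) := by
  unfold m
  rw [← Finset.card_union_of_disjoint]
  · congr 1
    ext y
    simp only [mg, mem_filter, mem_union]
    by_cases h : f y = f a <;> simp [h] <;> tauto
  · rw [Finset.disjoint_left]
    intro y hy hy'
    exact hxa ((mem_filter.1 hy).2.symm.trans (mem_filter.1 hy').2)

lemma m_mg_ne (f : α → ι) (A : Finset α) {x a : α} {i : ι} (hx : i ≠ f x) (ha : i ≠ f a) :
    m (mg f x a) A i = m f A i := by
  unfold m
  congr 1
  ext y
  rw [mem_filter, mem_filter]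
  unfold mg
  by_cases h : f y = f a
  · rw [if_pos h, h]
    exact ⟨fun k => absurd k.2.symm hx, fun k => absurd k.2.symm ha⟩
  · rw [if_neg h]

lemma P_mg (f : α → ι) (A : Finset α) {x a : α} (hxa : f x ≠ f a) :
    P (mg f x a) A = (m f A (f x) + m f A (f a)) *
      ∏ i ∈ ((univ.image f).erase (f x)).erase (f a), m f A i := by
  unfold P
  rw [image_mg f x a hxa, Finset.erase_right_comm,
    ← Finset.mul_prod_erase ((univ.image f).erase (f a)) _ (a := f x) (by simp [hxa]),
    m_mg_self f A hxa]
  congr 1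
  refine Finset.prod_congr rfl fun i hi => ?_
  simp only [mem_erase] at hi
  exact m_mg_ne f A hi.1 hi.2.1

lemma sum_fiber (f : α → ι) (A : Finset α) (x : α) (g : ι → ℕ) :
    ∑ a ∈ A with f a ≠ f x, g (f a) = ∑ i ∈ (univ.image f).erase (f x), m f A i * g i := by
  rw [← Finset.sum_fiberwise_of_maps_to (t := (univ.image f).erase (f x)) (g := f)
    (fun a ha => by simpa using (mem_filter.1 ha).2)]
  refine Finset.sum_congr rfl fun i hi => ?_
  rw [Finset.sum_congr rfl (g := fun _ => g i)
    (fun a ha => by rw [(mem_filter.1 ha).2]), Finset.sum_const, smul_eq_mul]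
  congr 1
  unfold m
  rw [Finset.filter_filter]
  congr 1
  ext y
  simp only [mem_filter]
  have := Finset.ne_of_mem_erase hi
  constructor
  · rintro ⟨h1, h2, h3⟩; exact ⟨h1, h3⟩
  · rintro ⟨h1, rfl⟩; exact ⟨h1, this, rfl⟩

lemma card_split (f : α → ι) (A : Finset α) (x : α) :
    m f A (f x) + ∑ i ∈ (univ.image f).erase (f x), m f A i = A.card := by
  have := sum_fiber f A x (fun _ => 1)
  simp only [mul_one] at this
  rw [← this, ← Finset.card_eq_sum_ones, m]
  exact Finset.card_filter_add_card_filter_not _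

lemma sum_P_mg (f : α → ι) (A : Finset α) (x : α) {k : ℕ} (hk : (univ.image f).card = k + 1) :
    ∑ a ∈ A with f a ≠ f x, P (mg f x a) A + Q f A x * m f A (f x) =
      Q f A x * (k * m f A (f x) + A.card) := by
  have h1 : ∑ a ∈ A with f a ≠ f x, P (mg f x a) A =
      ∑ a ∈ A with f a ≠ f x, (fun j => (m f A (f x) + m f A j) *
      ∏ i ∈ ((univ.image f).erase (f x)).erase j, m f A i) (f a) :=
    Finset.sum_congr rfl fun a ha => P_mg f A (mem_filter.1 ha).2.symm
  have h2 : ∀ j ∈ (univ.image f).erase (f x), m f A j * ((m f A (f x) + m f A j) *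
      ∏ i ∈ ((univ.image f).erase (f x)).erase j, m f A i) =
      Q f A x * (m f A (f x) + m f A j) := by
    intro j hj
    unfold Q
    rw [← Finset.mul_prod_erase _ _ hj]
    ring
  have h3 : ((univ.image f).erase (f x)).card = k := by
    rw [Finset.card_erase_of_mem (by simp), hk]; simp
  rw [h1, sum_fiber f A x (fun j => (m f A (f x) + m f A j) *
      ∏ i ∈ ((univ.image f).erase (f x)).erase j, m f A i), Finset.sum_congr rfl h2,
      ← Finset.mul_sum, Finset.sum_add_distrib, Finset.sum_const, h3, ← card_split f A x]
  simp only [smul_eq_mul]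
  ring

end prod

lemma C_eq {ι : Type*} [DecidableEq ι] (A : Finset α) : ∀ (π : Perm α) (f : α → ι) (s : ℕ),
    IsLab π f → ncyc π = s + 2 →
    (C A π (s+1)).card = P f A * (A.card - 1).descFactorial s := by
  induction A using Finset.induction_on with
  | empty =>
    intro π f s hf h
    rw [C_empty]
    have : P f ∅ = 0 := by
      rw [← hf.card] at h
      obtain ⟨i, hi⟩ : (univ.image f).Nonempty := by
        rw [← Finset.card_pos]; omega
      exact Finset.prod_eq_zero hi (by simp [m])
    simp [this]
  | insert x A hx ih =>
    intro π f s hf h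
    have hk : (univ.image f).card = (s + 1) + 1 := by rw [hf.card, h]
    rw [C_insert A x hx, ih π f s hf h, P_insert f hx, Finset.card_insert_of_notMem hx,
      Nat.add_sub_cancel, ← Finset.sum_filter_add_sum_filter_not A (fun a => f a ≠ f x)]
    have hz : ∑ a ∈ A with ¬ f a ≠ f x, (C A (swap x a * π) s).card = 0 := by
      refine Finset.sum_eq_zero fun a ha => C_lt _ _ _ ?_
      have := ncyc_swap_same ((hf x a).1 (not_not.1 (mem_filter.1 ha).2).symm)
      omega
    have hn : ∀ a, f a ≠ f x → ncyc (swap x a * π) = s + 1 := fun a ha => by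
      have := ncyc_join (fun h => ha ((hf x a).2 h).symm)
      omega
    rw [hz, add_zero, P_eq f A x]
    cases s with
    | zero =>
      have h1 : ∑ a ∈ A with f a ≠ f x, (C A (swap x a * π) 0).card = Q f A x := by
        rw [Finset.sum_congr rfl (g := fun _ => 1) (fun a ha => by
          rw [C_zero, if_pos (long_of_ncyc (hn a (mem_filter.1 ha).2))])]
        have := sum_fiber f A x (fun _ => 1)
        simp only [mul_one] at this
        rw [this]
        obtain ⟨i, hi⟩ := Finset.card_eq_one.1 (show ((univ.image f).erase (f x)).card = 1 by
          rw [Finset.card_erase_of_mem (by simp), hk])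
        rw [Q, hi]; simp
      rw [h1]; simp; ring
    | succ t =>
      have h1 : ∑ a ∈ A with f a ≠ f x, (C A (swap x a * π) (t+1)).card =
          (∑ a ∈ A with f a ≠ f x, P (mg f x a) A) * (A.card - 1).descFactorial t := by
        rw [Finset.sum_mul]
        refine Finset.sum_congr rfl fun a ha => ?_
        have ha := (mem_filter.1 ha).2
        exact ih _ _ _ (isLab_mg hf x a ha.symm) (hn a ha)
      rw [h1]
      have h2 := sum_P_mg f A x hk
      have h3 : ∑ a ∈ A with f a ≠ f x, P (mg f x a) A =
          Q f A x * ((t + 1) * m f A (f x) + A.card) := by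
        have : Q f A x * ((t + 1 + 1) * m f A (f x) + A.card) =
          Q f A x * ((t + 1) * m f A (f x) + A.card) + Q f A x * m f A (f x) := by ring
        rw [this] at h2
        exact Nat.add_right_cancel h2
      rw [h3]
      rcases Nat.eq_zero_or_pos A.card with h0 | h0
      · have hA := Finset.card_eq_zero.1 h0
        have : Q f A x = 0 := by
          obtain ⟨i, hi⟩ : ((univ.image f).erase (f x)).Nonempty := by
            rw [← Finset.card_pos, Finset.card_erase_of_mem (by simp), hk]; omega
          exact Finset.prod_eq_zero hi (by simp [m, hA])
        simp [this]
      · obtain ⟨N, hN⟩ := Nat.exists_eq_succ_of_ne_zero h0.ne'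
        rw [hN, Nat.succ_sub_one, Nat.succ_descFactorial_succ, Nat.descFactorial_succ]
        rcases Nat.lt_or_ge N t with hlt | hge
        · rw [Nat.descFactorial_eq_zero_iff_lt.2 hlt]; simp
        · obtain ⟨d, rfl⟩ := Nat.exists_eq_add_of_le hge
          rw [Nat.add_sub_cancel_left, Nat.succ_eq_add_one]
          ring

lemma cl_support {σ : Perm α} {y : α} (hy : y ∈ σ.support) : cl σ y = (σ.cycleOf y).support := by
  ext z
  simp only [cl, mem_filter, mem_univ, true_and]
  rw [mem_support_cycleOf_iff' (by simpa using hy)]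

lemma cl_fixed {σ : Perm α} {y : α} (hy : y ∉ σ.support) : cl σ y = {y} := by
  ext z
  simp only [cl, mem_filter, mem_univ, true_and, mem_singleton]
  constructor
  · rintro ⟨i, rfl⟩
    exact zpow_apply_eq_self_of_apply_eq_self (by simpa using hy) i
  · rintro rfl; exact SameCycle.refl _ _

lemma parts_eq (σ : Perm α) : σ.partition.parts = (univ.image (cl σ)).val.map Finset.card := by
  have h1 : σ.cycleFactorsFinset.image support = σ.support.image (cl σ) := by
    ext s
    simp only [mem_image]
    constructor
    · rintro ⟨c, hc, rfl⟩
      obtain ⟨y, hy⟩ := (mem_cycleFactorsFinset_iff.1 hc).1.nonempty_support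
      have hys := mem_cycleFactorsFinset_support_le hc hy
      exact ⟨y, hys, by rw [cl_support hys, cycle_is_cycleOf hy hc]⟩
    · rintro ⟨y, hy, rfl⟩
      exact ⟨_, cycleOf_mem_cycleFactorsFinset_iff.2 hy, (cl_support hy).symm⟩
  have hinj : Set.InjOn support (σ.cycleFactorsFinset : Set (Perm α)) := by
    intro c hc d hd h
    obtain ⟨y, hy⟩ := (mem_cycleFactorsFinset_iff.1 hc).1.nonempty_support
    rw [cycle_is_cycleOf hy hc, cycle_is_cycleOf (h ▸ hy) hd]
  have h2 : univ.image (cl σ) = (σ.support.image (cl σ)).disjUnion (σ.supportᶜ.image (cl σ)) (by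
      rw [Finset.disjoint_left]
      intro s hs hs'
      obtain ⟨y, hy, rfl⟩ := mem_image.1 hs
      obtain ⟨z, hz, he⟩ := mem_image.1 hs'
      rw [mem_compl] at hz
      have : y ∈ cl σ z := by rw [he]; simp [cl, SameCycle.refl]
      rw [cl_fixed hz, mem_singleton] at this
      exact hz (this ▸ hy)) := by
    rw [Finset.disjUnion_eq_union, ← Finset.image_union, Finset.union_compl]
  rw [parts_partition, h2, Finset.disjUnion_val, Multiset.map_add, ← h1,
    Finset.image_val_of_injOn hinj, cycleType_def, Multiset.map_map]
  congr 1
  have h3 : σ.supportᶜ.image (cl σ) = σ.supportᶜ.image (fun y => {y}) :=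
    Finset.image_congr fun y hy => cl_fixed (by simpa using hy)
  rw [h3, Finset.image_val_of_injOn (fun y _ z _ h => Finset.singleton_injective h), Multiset.map_map]
  symm
  rw [Multiset.eq_replicate]
  constructor
  · rw [Multiset.card_map, ← Finset.card_def, Finset.card_compl]
  · intro b hb
    obtain ⟨y, -, rfl⟩ := Multiset.mem_map.1 hb
    simp

lemma card_parts (σ : Perm α) : σ.partition.parts.card = ncyc σ := by
  rw [parts_eq, Multiset.card_map]; rfl

lemma prod_parts (σ : Perm α) : σ.partition.parts.prod = P (cl σ) univ := by
  rw [parts_eq]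
  refine Finset.prod_congr rfl fun i hi => ?_
  obtain ⟨y, -, rfl⟩ := mem_image.1 hi
  unfold m
  congr 1
  ext z
  simp only [mem_filter, mem_univ, true_and, isLab_cl σ z y]
  simp only [cl, mem_filter, mem_univ, true_and]
  exact sameCycle_comm

lemma long_iff (h2 : 2 ≤ Fintype.card α) (c : Perm α) :
    IsLong c ↔ c.IsCycle ∧ c.support.card = Fintype.card α := by
  rw [Finset.card_eq_iff_eq_univ]
  constructor
  · intro h
    obtain ⟨y, z, hyz⟩ := Fintype.one_lt_card_iff.1 h2
    have hm : ∀ w, c w ≠ w := by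
      intro w hw
      have : ∀ v, v = w := fun v => by
        obtain ⟨i, rfl⟩ := h w v
        exact zpow_apply_eq_self_of_apply_eq_self hw i
      exact hyz ((this y).trans (this z).symm)
    exact ⟨⟨y, hm y, fun w _ => h y w⟩, by ext w; simpa using hm w⟩
  · rintro ⟨hc, hs⟩ y z
    have hm : ∀ w, c w ≠ w := fun w => by
      rw [← mem_support, hs]; simp
    exact hc.sameCycle (hm y) (hm z)

lemma ncyc_le (σ : Perm α) : ncyc σ ≤ Fintype.card α := Finset.card_image_le

end NCount




/-- Bédard–Goupil / Biane / Rattan–Śniady count: let `μ = (μ_1 ≥ ⋯ ≥ μ_ℓ ≥ 1)` be a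
partition of `n ≥ 2` with `ℓ` parts, `j = n − ℓ + 2`, and let `σ_μ ∈ S_n` have cycle
type `μ` (its cycle partition, fixed points included, is the multiset of parts of `μ`).
Then the number of pairs `(σ₁, σ₂)` of permutations with `σ₁σ₂ = σ_μ`, `σ₂` an
`n`-cycle, and `σ₁` having exactly `j − 1` cycles (fixed points counted as cycles),
equals `(∏_i μ_i) · (n−1)! / (n−ℓ+1)!`. -/
theorem stmt9 (n : ℕ) (hn : 2 ≤ n) (l : ℕ) (μ : Fin l → ℕ)
    (hmono : Antitone μ) (hpos : ∀ i, 1 ≤ μ i) (hsum : ∑ i, μ i = n)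
    (σμ : Equiv.Perm (Fin n))
    (hσ : σμ.partition.parts = (List.ofFn μ : Multiset ℕ)) :
    (Fintype.card {p : Equiv.Perm (Fin n) × Equiv.Perm (Fin n) //
        p.1 * p.2 = σμ ∧ p.2.IsCycle ∧ p.2.support.card = n ∧
          p.1.partition.parts.card = (n - l + 2) - 1} : ℚ)
      = (∏ i, (μ i : ℚ)) * (n - 1).factorial / (n - l + 1).factorial := by
  have hl : NCount.ncyc σμ = l := by
    rw [← NCount.card_parts, hσ]; simp
  have hP : NCount.P (NCount.cl σμ) Finset.univ = ∏ i, μ i := by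
    rw [← NCount.prod_parts, hσ, Multiset.prod_coe, List.prod_ofFn]
  have hln : l ≤ n := by
    rw [← hl]; simpa using NCount.ncyc_le σμ
  have hl1 : 1 ≤ l := by
    rcases Nat.eq_zero_or_pos l with h | h
    · subst h; simp at hsum; omega
    · exact h
  have hc : Fintype.card {p : Equiv.Perm (Fin n) × Equiv.Perm (Fin n) //
        p.1 * p.2 = σμ ∧ p.2.IsCycle ∧ p.2.support.card = n ∧
          p.1.partition.parts.card = (n - l + 2) - 1} =
      (NCount.C Finset.univ σμ (l - 1)).card := by
    rw [Fintype.card_subtype]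
    have hlong : ∀ c : Equiv.Perm (Fin n), NCount.IsLong c ↔ c.IsCycle ∧ c.support.card = n := by
      intro c
      have := NCount.long_iff (by simpa using hn) c
      rwa [Fintype.card_fin] at this
    refine Finset.card_bij' (fun p _ => p.1) (fun σ _ => (σ, σ⁻¹ * σμ)) ?_ ?_ ?_ ?_
    · intro p hp
      simp only [Finset.mem_filter, Finset.mem_univ, true_and, NCount.card_parts] at hp
      obtain ⟨h1, h2, h3, h4⟩ := hp
      simp only [NCount.C, Finset.mem_filter, Finset.mem_univ, true_and, Fintype.card_fin,
        not_true_eq_false, false_implies, implies_true]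
      refine ⟨by omega, ?_⟩
      rw [← h1, inv_mul_cancel_left]
      exact (hlong _).2 ⟨h2, h3⟩
    · intro σ hσ'
      simp only [NCount.C, Finset.mem_filter, Finset.mem_univ, true_and, Fintype.card_fin,
        not_true_eq_false, false_implies, implies_true] at hσ'
      obtain ⟨h1, h2⟩ := hσ'
      obtain ⟨h3, h4⟩ := (hlong _).1 h2
      simp only [Finset.mem_filter, Finset.mem_univ, true_and, NCount.card_parts]
      exact ⟨by simp, h3, h4, by omega⟩
    · intro p hp
      simp only [Finset.mem_filter, Finset.mem_univ, true_and] at hp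
      ext1
      · rfl
      · simp only; rw [← hp.1, inv_mul_cancel_left]
    · intro σ _; rfl
  rw [hc]
  have hfac : ((n - l + 1).factorial : ℚ) ≠ 0 := by exact_mod_cast Nat.factorial_ne_zero _
  rw [eq_div_iff hfac]
  rcases Nat.lt_or_ge 1 l with h | h
  · obtain ⟨s, rfl⟩ := Nat.exists_eq_add_of_le h
    have hs : 1 + 1 + s - 1 = s + 1 := by omega
    have key := NCount.C_eq Finset.univ σμ (NCount.cl σμ) s (NCount.isLab_cl σμ)
      (by rw [hl]; omega)
    rw [Finset.card_univ, Fintype.card_fin] at key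
    simp only [Nat.succ_eq_add_one] at *
    rw [hs, key, hP]
    have hd := Nat.factorial_mul_descFactorial (show s ≤ n - 1 by omega)
    have he : n - 1 - s = n - (1 + 1 + s) + 1 := by omega
    rw [he] at hd
    rw [← hd]
    push_cast
    ring
  · obtain rfl : l = 1 := by omega
    rw [Nat.sub_self, NCount.C_zero, if_pos (NCount.long_of_ncyc hl)]
    simp only [Finset.univ_unique, Fin.default_eq_zero, Finset.sum_singleton,
      Finset.prod_singleton] at hsum ⊢
    rw [hsum, Nat.sub_add_cancel hln]
    have := Nat.mul_factorial_pred (show n ≠ 0 by omega)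
    rw [← this]
    push_cast
    ring
end
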